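/- Let W be a finite-dimensional complex vector space regarded as a trivial module over sl(2,ℂ), and let β : W × W → ℂ be a symmetric bilinear form. Set g₁ = sl(2,ℂ) ⊕ W, where the first summand is the adjoint module, with action x·(y,w) = (⁅x,y⁆, 0). Define μ : g₁³ → sl(2,ℂ) by μ((y₁,w₁),(y₂,w₂),(y₃,w₃)) = β(w₁,w₂)y₃ + β(w₂,w₃)y₁ + β(w₃,w₁)y₂. Then μ is totally symmetric, satisfies the equivariance identity J3 and the identity J4; hence sl(2,ℂ) ⊕ (sl(2,ℂ) ⊕ W) is an elementary Lie algebra of order 3. (This is case 2 of Theorem 3.1, with g₁ ≅ D₂ ⊕ D₀^{(1)} ⊕ ⋯ ⊕ D₀^{(k)} and brackets {λᵢ,λⱼ,Y_a} = α_{ij}X_a, where α_{ij} = β(λᵢ,λⱼ).) -/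

import Mathlib

noncomputable section

/-- The Lie algebra `sl(2,ℂ)` of traceless `2×2` complex matrices. -/
abbrev sl2C : Type := ↥(LieAlgebra.SpecialLinear.sl (Fin 2) ℂ)

/-- On `g₁ = sl(2,ℂ) ⊕ W` (adjoint module plus trivial module `W`), the 3-bracket
`μ((y₁,w₁),(y₂,w₂),(y₃,w₃)) = β(w₁,w₂)y₃ + β(w₂,w₃)y₁ + β(w₃,w₁)y₂`. -/
def muAdW {W : Type*} [AddCommGroup W] [Module ℂ W] (β : W →ₗ[ℂ] W →ₗ[ℂ] ℂ)
    (p q r : sl2C × W) : sl2C :=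
  β p.2 q.2 • r.1 + β q.2 r.2 • p.1 + β r.2 p.2 • q.1

/-- The action of `sl(2,ℂ)` on `g₁ = sl(2,ℂ) ⊕ W`: `x·(y,w) = (⁅x,y⁆, 0)`. -/
def actAdW {W : Type*} [AddCommGroup W] [Module ℂ W] (x : sl2C) (p : sl2C × W) :
    sl2C × W :=
  (⁅x, p.1⁆, 0)

/-- Case 2 of Theorem 3.1: for `W` a finite-dimensional trivial `sl(2,ℂ)`-module and `β`
a symmetric bilinear form on `W`, the 3-bracket
`μ((y₁,w₁),(y₂,w₂),(y₃,w₃)) = β(w₁,w₂)y₃ + β(w₂,w₃)y₁ + β(w₃,w₁)y₂` on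
`g₁ = sl(2,ℂ) ⊕ W` is totally symmetric and satisfies the identities J3 and J4; hence
`sl(2,ℂ) ⊕ (sl(2,ℂ) ⊕ W)` is an elementary Lie algebra of order 3. -/
theorem sl2_adjoint_plus_trivial_order3
    {W : Type*} [AddCommGroup W] [Module ℂ W] [FiniteDimensional ℂ W]
    (β : W →ₗ[ℂ] W →ₗ[ℂ] ℂ) (hβ : ∀ w w' : W, β w w' = β w' w) :
    -- μ is totally symmetric
    (∀ p q r : sl2C × W, muAdW β p q r = muAdW β q p r) ∧
    (∀ p q r : sl2C × W, muAdW β p q r = muAdW β p r q) ∧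
    -- J3 : equivariance
    (∀ (x : sl2C) (p q r : sl2C × W),
      ⁅x, muAdW β p q r⁆ =
        muAdW β (actAdW x p) q r + muAdW β p (actAdW x q) r + muAdW β p q (actAdW x r)) ∧
    -- J4
    (∀ p q r s : sl2C × W,
      actAdW (muAdW β q r s) p + actAdW (muAdW β p r s) q +
        actAdW (muAdW β p q s) r + actAdW (muAdW β p q r) s = 0) := by
  refine ⟨fun p q r => ?_, fun p q r => ?_, fun x p q r => ?_, fun p q r s => ?_⟩
  · simp only [muAdW]
    rw [hβ p.2 q.2, hβ q.2 r.2, hβ r.2 p.2]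
    abel
  · simp only [muAdW]
    rw [hβ p.2 q.2, hβ q.2 r.2, hβ r.2 p.2]
    abel
  · simp only [muAdW, actAdW, lie_add, lie_smul, map_zero, LinearMap.zero_apply, zero_smul]
    abel
  · refine Prod.ext ?_ (by simp [actAdW])
    simp only [muAdW, actAdW, Prod.fst_add, Prod.fst_zero, add_lie, smul_lie]
    rw [← lie_skew p.1 q.1, ← lie_skew p.1 r.1, ← lie_skew p.1 s.1, ← lie_skew q.1 r.1,
      ← lie_skew q.1 s.1, ← lie_skew r.1 s.1, hβ s.2 q.2, hβ s.2 p.2, hβ r.2 p.2]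
    simp only [smul_neg]
    abel
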